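/- Every 3iet word is aperiodic and uniformly recurrent: for every irrational ε ∈ (0,1), every ℓ with max{ε,1−ε} < ℓ < 1, and every x0 ∈ [0,ℓ), the word u_{ε,ℓ,x0} is not eventually periodic and is uniformly recurrent. -/

import Mathlib

/-!
The map `T3 ε ℓ` is the first return map to `[0, ℓ)` of the two-interval exchange `T2 ε`, which is
the rotation `z ↦ z - ε` of the circle `ℝ / ℤ` written on the fundamental domain `[0, 1)`.

*Aperiodicity.* `T3 ε ℓ` translates a point by an amount depending only on its letter. If the
coding of an orbit is eventually periodic, the orbit is therefore eventually moved by one and the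
same vector over every period; being bounded it must be eventually periodic itself. A periodic point
of a first return map is periodic for the original map, but an irrational rotation has none.

*Uniform recurrence.* The exchanged intervals are closed on the left, so the points that share the
first `n` letters of `y` contain an interval `[y, y + δ)`. By minimality and compactness, rotation
orbits enter the interior of that interval within a bounded number of steps, whatever their starting
point. The orbit under the first return map gets there at least as soon.
-/

/-- The alphabet of 3iet words. -/
inductive L3 | A | B | C
deriving DecidableEq, Inhabited

/-- The three-interval exchange transformation `T_{ε,ℓ}`. -/
noncomputable def T3 (ε ℓ : ℝ) (x : ℝ) : ℝ :=
  if x < ℓ - 1 + ε then x + 1 - ε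
  else if x < ε then x + 1 - 2*ε
  else x - ε

/-- The 3iet word `u_{ε,ℓ,x0}` coding the orbit of `x0` under `T_{ε,ℓ}`. -/
noncomputable def u3 (ε ℓ x0 : ℝ) (n : ℕ) : L3 :=
  if (T3 ε ℓ)^[n] x0 < ℓ - 1 + ε then L3.A
  else if (T3 ε ℓ)^[n] x0 < ε then L3.B
  else L3.C

/-- The two-interval exchange transformation `T_ε`. -/
noncomputable def T2 (ε : ℝ) (x : ℝ) : ℝ := if x < ε then x + 1 - ε else x - ε

/-- The Sturmian word `u_{ε,x0}` of slope `ε` coding the orbit of `x0` under `T_ε`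
(letter `0` is `false`, letter `1` is `true`). -/
noncomputable def u2 (ε x0 : ℝ) (n : ℕ) : Bool := if (T2 ε)^[n] x0 < ε then false else true

/-- `w` is a factor of the infinite word `u`. -/
def IsFactor {α : Type*} (w : List α) (u : ℕ → α) : Prop :=
  ∃ i : ℕ, w = (List.range w.length).map fun j => u (i + j)

/-- The prefix of length `m` of the periodic infinite word `www⋯`;
for `|w| ≤ m` this is the fractional power `w^{m/|w|}`. -/
def powPrefix {α : Type*} [Inhabited α] (w : List α) (m : ℕ) : List α :=
  (List.range m).map fun j => w.getD (j % w.length) default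

/-- The index of the factor `w` in the infinite word `u`:
`sup {r ∈ ℚ, r ≥ 1, r|w| ∈ ℕ | w^r is a factor of u}`, as an element of `ℝ ∪ {+∞}`. -/
noncomputable def factorIndex {α : Type*} [Inhabited α] (u : ℕ → α) (w : List α) : EReal :=
  sSup {x : EReal | ∃ m : ℕ, w.length ≤ m ∧ IsFactor (powPrefix w m) u ∧
    x = (((m : ℝ) / (w.length : ℝ) : ℝ) : EReal)}

/-- The index of the infinite word `u`: `sup {ind(w) | w a nonempty factor of u}`. -/
noncomputable def wordIndex {α : Type*} [Inhabited α] (u : ℕ → α) : EReal :=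
  sSup {x : EReal | ∃ w : List α, w ≠ [] ∧ IsFactor w u ∧ x = factorIndex u w}

/-- The Gauss map `x ↦ {1/x}`. -/
noncomputable def gaussMap (x : ℝ) : ℝ := Int.fract x⁻¹

/-- `cfa ε n` is the partial quotient `a_{n+1}` of the continued fraction
expansion `ε = [0; a₁, a₂, a₃, …]` of the irrational `ε ∈ (0,1)`. -/
noncomputable def cfa (ε : ℝ) (n : ℕ) : ℕ := ⌊(gaussMap^[n] ε)⁻¹⌋₊

/-- The morphism `σ01 : A ↦ 0, B ↦ 01, C ↦ 1`. -/
def sigma01 : L3 → List Bool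
  | L3.A => [false]
  | L3.B => [false, true]
  | L3.C => [true]

/-- The morphism `σ10 : A ↦ 0, B ↦ 10, C ↦ 1`. -/
def sigma10 : L3 → List Bool
  | L3.A => [false]
  | L3.B => [true, false]
  | L3.C => [true]

/-- The image `φ(u₀)φ(u₁)φ(u₂)⋯` of an infinite word `u` under a (nonerasing) morphism `φ`. -/
def morphWord (φ : L3 → List Bool) (u : ℕ → L3) (m : ℕ) : Bool :=
  ((List.range (m+1)).flatMap fun k => φ (u k)).getD m false

/-- `u` is a uniformly recurrent infinite word: every factor occurs infinitely often
with bounded gaps (every window of some length `R` contains an occurrence). -/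
def UniformlyRecurrent {α : Type*} (u : ℕ → α) : Prop :=
  ∀ w : List α, IsFactor w u → ∃ R : ℕ, ∀ i : ℕ, ∃ j : ℕ, i ≤ j ∧ j < i + R ∧
    w = (List.range w.length).map fun t => u (j + t)

/-- `u` is eventually periodic. -/
def EventuallyPeriodic {α : Type*} (u : ℕ → α) : Prop :=
  ∃ N p : ℕ, 0 < p ∧ ∀ n : ℕ, N ≤ n → u (n + p) = u n

/-- The standard words of `ε = [0; a₁, a₂, …]`, with the index shifted by one:
`sw ε 0 = s₋₁ = 1`, `sw ε 1 = s₀ = 0`, `sw ε 2 = s₁ = s₀^{a₁-1} s₋₁`, and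
`sw ε (n+3) = s_{n+2} = s_{n+1}^{a_{n+2}} s_n`. -/
noncomputable def sw (ε : ℝ) : ℕ → List Bool
  | 0 => [true]
  | 1 => [false]
  | 2 => (List.replicate (cfa ε 0 - 1) ([false] : List Bool)).flatten ++ [true]
  | (n+3) => (List.replicate (cfa ε (n+1)) (sw ε (n+2))).flatten ++ sw ε (n+1)

/-- Denominators of the convergents of `ε`, shifted by one: `qq ε 0 = q₋₁ = 0`,
`qq ε 1 = q₀ = 1`, and `qq ε (n+2) = q_{n+1} = a_{n+1} q_n + q_{n-1}`. -/
noncomputable def qq (ε : ℝ) : ℕ → ℕ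
  | 0 => 0
  | 1 => 1
  | (n+2) => cfa ε n * qq ε (n+1) + qq ε n

/-- `u` is a 3iet word. -/
def Is3ietWord (u : ℕ → L3) : Prop :=
  ∃ ε ℓ x0 : ℝ, Irrational ε ∧ 0 < ε ∧ ε < 1 ∧ max ε (1 - ε) < ℓ ∧ ℓ < 1 ∧
    x0 ∈ Set.Ico 0 ℓ ∧ u = u3 ε ℓ x0

/-- `v` is a Sturmian word. -/
def IsSturmianWord (v : ℕ → Bool) : Prop :=
  ∃ ε x0 : ℝ, Irrational ε ∧ 0 < ε ∧ ε < 1 ∧ x0 ∈ Set.Ico (0:ℝ) 1 ∧ v = u2 ε x0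

/-- The infinite binary word `v1` is amicable with `v2` (`v1 ∝ v2`). -/
def AmicableInf (v1 v2 : ℕ → Bool) : Prop :=
  ∃ w : ℕ → L3, v1 = morphWord sigma01 w ∧ v2 = morphWord sigma10 w

/-- The morphism `Φ_k : A ↦ 0, B ↦ 01^{k+1}, C ↦ 01^k`. -/
def Phi (k : ℕ) : L3 → List Bool
  | L3.A => [false]
  | L3.B => false :: List.replicate (k+1) true
  | L3.C => false :: List.replicate k true

/-- The infinite word `B₀B₁B₂⋯` obtained by concatenating the sequence of
(nonempty) blocks `B`. -/
def concatOfBlocks (B : ℕ → List Bool) (m : ℕ) : Bool :=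
  ((List.range (m+1)).flatMap B).getD m false

open Set Filter Function Topology

/-! ### Eventually periodic and uniformly recurrent words -/

lemma uniformlyRecurrent_of_forall_exists_le {α : Type*} {u : ℕ → α}
    (h : ∀ i n, ∃ M, ∀ k, ∃ j ≤ M, ∀ t < n, u (k + j + t) = u (i + t)) :
    UniformlyRecurrent u := by
  rintro w ⟨i, hw⟩
  obtain ⟨M, hM⟩ := h i w.length
  refine ⟨M + 1, fun k => ?_⟩
  obtain ⟨j, hj, hju⟩ := hM k
  exact ⟨k + j, by omega, by omega,
    hw.trans (List.map_congr_left fun t ht => (hju t (List.mem_range.1 ht)).symm)⟩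

lemma eq_zero_of_isBounded_range_nsmul {E : Type*} [NormedAddCommGroup E] [NormedSpace ℝ E]
    {d : E} (h : Bornology.IsBounded (range fun k : ℕ => k • d)) : d = 0 := by
  obtain ⟨C, hC⟩ := h.exists_norm_le
  have hle (k : ℕ) : k * ‖d‖ ≤ C := by
    simpa [← Nat.cast_smul_eq_nsmul ℝ, norm_smul] using hC _ (mem_range_self k)
  by_contra hd
  obtain ⟨k, hk⟩ := exists_nat_gt (C / ‖d‖)
  exact (hle k).not_gt ((div_lt_iff₀ (norm_pos_iff.2 hd)).1 hk)

lemma EventuallyPeriodic.exists_add_eq {α E : Type*} [NormedAddCommGroup E] [NormedSpace ℝ E]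
    {u : ℕ → α} {x : ℕ → E} {g : α → E} (hu : EventuallyPeriodic u)
    (hx : ∀ n, x (n + 1) = x n + g (u n)) (hb : Bornology.IsBounded (range x)) :
    ∃ N p, 0 < p ∧ x (N + p) = x N := by
  obtain ⟨N, p, hp, hper⟩ := hu
  set d := x (N + p) - x N with hd
  have hshift : ∀ n, N ≤ n → x (n + p) = x n + d := by
    intro n hn
    induction n, hn using Nat.le_induction with
    | base => rw [hd, add_sub_cancel]
    | succ n hn ih => rw [Nat.add_right_comm, hx, hx, hper n hn, ih, add_right_comm]
  have hlin (k : ℕ) : x (N + k * p) = x N + k • d := by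
    induction k with
    | zero => simp
    | succ k ih =>
      rw [Nat.succ_mul, ← add_assoc, hshift _ (Nat.le_add_right _ _), ih, succ_nsmul, add_assoc]
  have hd0 : d = 0 := by
    refine eq_zero_of_isBounded_range_nsmul ((hb.sub hb).subset ?_)
    rintro _ ⟨k, rfl⟩
    exact ⟨_, mem_range_self (N + k * p), _, mem_range_self N, by simp [hlin]⟩
  exact ⟨N, p, hp, sub_eq_zero.1 hd0⟩

/-! ### First return maps -/

/-- `F` is the first return map of `f` to `S`: it sends `x ∈ S` to the first point of the forward
orbit `f x, f (f x), …` that lies in `S`. In particular every point of `S` does return to `S`; the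
values of `F` outside `S` are irrelevant. -/
def IsFirstReturnMap {X : Type*} (f : X → X) (S : Set X) (F : X → X) : Prop :=
  ∀ x ∈ S, F x ∈ S ∧ ∃ k, 0 < k ∧ f^[k] x = F x ∧ ∀ i, 0 < i → i < k → f^[i] x ∉ S

namespace IsFirstReturnMap

variable {X : Type*} {f F : X → X} {S : Set X} {x : X}

lemma mapsTo (h : IsFirstReturnMap f S F) : MapsTo F S S := fun x hx => (h x hx).1

lemma exists_iterate_eq_of_mem (h : IsFirstReturnMap f S F) {n : ℕ} (hx : x ∈ S)
    (hn : f^[n] x ∈ S) : ∃ j ≤ n, F^[j] x = f^[n] x := by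
  induction n using Nat.strong_induction_on generalizing x with
  | _ n ih =>
    rcases Nat.eq_zero_or_pos n with rfl | hpos
    · exact ⟨0, le_rfl, rfl⟩
    obtain ⟨hFx, k, hk, hkF, hfirst⟩ := h x hx
    have hkn : k ≤ n := not_lt.1 fun hlt => hfirst n hpos hlt hn
    have hsplit : f^[n] x = f^[n - k] (F x) := by
      rw [← hkF, ← iterate_add_apply, Nat.sub_add_cancel hkn]
    rw [hsplit] at hn ⊢
    obtain ⟨j, hj, hjF⟩ := ih (n - k) (by omega) hFx hn
    exact ⟨j + 1, by omega, hjF⟩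

lemma exists_iterate_eq_iterate (h : IsFirstReturnMap f S F) (hx : x ∈ S) (n : ℕ) :
    ∃ k ≥ n, f^[k] x = F^[n] x := by
  induction n with
  | zero => exact ⟨0, le_rfl, rfl⟩
  | succ n ih =>
    obtain ⟨k, hkn, hk⟩ := ih
    obtain ⟨-, l, hl, hlF, -⟩ := h _ (h.mapsTo.iterate n hx)
    exact ⟨l + k, by omega, by rw [iterate_add_apply, hk, hlF, iterate_succ_apply']⟩

lemma mem_periodicPts (h : IsFirstReturnMap f S F) (hx : x ∈ S) (hF : x ∈ periodicPts F) :
    x ∈ periodicPts f := by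
  obtain ⟨n, hn, hper⟩ := hF
  obtain ⟨k, hk, hkF⟩ := h.exists_iterate_eq_iterate hx n
  exact mk_mem_periodicPts (hn.trans_le hk) (hkF.trans hper)

end IsFirstReturnMap

/-! ### Rotations -/

lemma exists_forall_exists_le_iterate_mem {X : Type*} [TopologicalSpace X] [CompactSpace X]
    {f : X → X} (hf : Continuous f) (hd : ∀ x, DenseRange fun n : ℕ => f^[n] x) {U : Set X}
    (hU : IsOpen U) (hne : U.Nonempty) : ∃ M, ∀ x, ∃ n ≤ M, f^[n] x ∈ U := by
  obtain ⟨t, ht⟩ := isCompact_univ.elim_finite_subcover (fun n : ℕ => f^[n] ⁻¹' U)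
    (fun n => hU.preimage (hf.iterate n))
    fun x _ => mem_iUnion.2 ((hd x).exists_mem_open hU hne)
  refine ⟨t.sup id, fun x => ?_⟩
  obtain ⟨n, hnt, hnU⟩ := mem_iUnion₂.1 (ht (mem_univ x))
  exact ⟨n, Finset.le_sup (f := id) hnt, hnU⟩

lemma denseRange_iterate_add_right {G : Type*} [AddGroup G] [TopologicalSpace G]
    [IsTopologicalAddGroup G] [CompactSpace G] {a : G} (ha : DenseRange fun n : ℤ => n • a)
    (x : G) : DenseRange fun n : ℕ => (· + a)^[n] x := by
  simp only [add_right_iterate]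
  exact (Homeomorph.addLeft x).surjective.denseRange.comp (denseRange_zsmul_iff_nsmul.1 ha)
    (Homeomorph.addLeft x).continuous

lemma notMem_periodicPts_add_right {G : Type*} [AddGroup G] {a : G} (ha : ¬ IsOfFinAddOrder a)
    (x : G) : x ∉ periodicPts (· + a) := by
  rintro ⟨n, hn, hper⟩
  refine ha (isOfFinAddOrder_iff_nsmul_eq_zero.2 ⟨n, hn, ?_⟩)
  simpa [IsPeriodicPt, IsFixedPt, add_right_iterate] using hper

lemma semiconj_coe_T2 (ε : ℝ) :
    Semiconj ((↑) : ℝ → UnitAddCircle) (T2 ε) (· + ((-ε : ℝ) : UnitAddCircle)) := by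
  intro x
  unfold T2
  split_ifs
  · rw [add_sub_right_comm, AddCircle.coe_add_period, sub_eq_add_neg, AddCircle.coe_add]
  · rw [sub_eq_add_neg, AddCircle.coe_add]

lemma mapsTo_T2 {ε : ℝ} (h0 : 0 ≤ ε) (h1 : ε ≤ 1) : MapsTo (T2 ε) (Ico 0 1) (Ico 0 1) := by
  rintro x ⟨hx0, hx1⟩
  unfold T2
  split_ifs <;> constructor <;> linarith

lemma notMem_periodicPts_T2 {ε : ℝ} (hirr : Irrational ε) (x : ℝ) : x ∉ periodicPts (T2 ε) := by
  have hord : ¬ IsOfFinAddOrder ((-ε : ℝ) : UnitAddCircle) := by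
    rw [AddCircle.not_isOfFinAddOrder_iff_forall_rat_ne_div]
    intro q
    simpa using (hirr.neg.ne_rat q).symm
  exact fun hx => notMem_periodicPts_add_right hord _ ((semiconj_coe_T2 ε).mapsTo_periodicPts hx)

lemma exists_forall_exists_le_iterate_T2_mem {ε : ℝ} (hirr : Irrational ε) (h0 : 0 ≤ ε)
    (h1 : ε ≤ 1) {U : Set ℝ} (hU : IsOpen U) (hne : U.Nonempty) (hsub : U ⊆ Ico 0 1) :
    ∃ M, ∀ x ∈ Ico (0 : ℝ) 1, ∃ n ≤ M, (T2 ε)^[n] x ∈ U := by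
  have hdense : DenseRange fun n : ℤ => n • ((-ε : ℝ) : UnitAddCircle) :=
    AddCircle.denseRange_zsmul_coe_iff.2 (by simpa using hirr)
  obtain ⟨M, hM⟩ := exists_forall_exists_le_iterate_mem (continuous_add_const _)
    (denseRange_iterate_add_right hdense) (QuotientAddGroup.isOpenMap_coe U hU) (hne.image _)
  refine ⟨M, fun x hx => ?_⟩
  obtain ⟨n, hn, y, hyU, hy⟩ := hM x
  have hyx : (y : UnitAddCircle) = ((T2 ε)^[n] x : ℝ) :=
    hy.trans ((semiconj_coe_T2 ε).iterate_right n x).symm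
  rw [AddCircle.coe_eq_coe_iff_of_mem_Ico (a := 0) (by simpa using hsub hyU)
    (by simpa using (mapsTo_T2 h0 h1).iterate n hx)] at hyx
  exact ⟨n, hn, hyx ▸ hyU⟩

/-! ### Right neighbourhoods -/

lemma eventually_lt_iff_lt_nhdsGE {α : Type*} [LinearOrder α] [TopologicalSpace α]
    [ClosedIciTopology α] (y a : α) : ∀ᶠ z in 𝓝[≥] y, (z < a ↔ y < a) := by
  rcases lt_or_ge y a with h | h
  · filter_upwards [nhdsWithin_le_nhds (Iio_mem_nhds h)] with z hz using iff_of_true hz h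
  · filter_upwards [self_mem_nhdsWithin] with z hz
    exact iff_of_false (h.trans hz).not_gt h.not_gt

lemma interior_nonempty_of_mem_nhdsGE {α : Type*} [LinearOrder α] [TopologicalSpace α]
    [OrderTopology α] [DenselyOrdered α] [NoMaxOrder α] {y : α} {s : Set α} (hs : s ∈ 𝓝[≥] y) :
    (interior s).Nonempty := by
  obtain ⟨b, hb, hbs⟩ := mem_nhdsGE_iff_exists_Ico_subset.1 hs
  exact (nonempty_Ioo.2 hb).mono (interior_maximal (Ioo_subset_Ico_self.trans hbs) isOpen_Ioo)

lemma tendsto_add_right_nhdsGE {G : Type*} [Add G] [Preorder G] [AddRightMono G]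
    [TopologicalSpace G] [SeparatelyContinuousAdd G] (c y : G) :
    Tendsto (· + c) (𝓝[≥] y) (𝓝[≥] (y + c)) :=
  (continuous_add_const c).continuousWithinAt.tendsto_nhdsWithin fun _ hz => add_le_add_left hz c

lemma tendsto_iterate_nhdsGE {X : Type*} [Preorder X] [TopologicalSpace X] {f : X → X}
    (hf : ∀ y, Tendsto f (𝓝[≥] y) (𝓝[≥] (f y))) (n : ℕ) (y : X) :
    Tendsto f^[n] (𝓝[≥] y) (𝓝[≥] (f^[n] y)) := by
  induction n with
  | zero => exact tendsto_id
  | succ n ih =>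
    rw [iterate_succ']
    exact (hf _).comp ih

/-! ### The three-interval exchange -/

/-- The translation performed by `T3 ε ℓ` on the interval coded by a letter. -/
def letterShift (ε : ℝ) : L3 → ℝ
  | L3.A => 1 - ε
  | L3.B => 1 - 2 * ε
  | L3.C => -ε

lemma u3_zero (ε ℓ x : ℝ) :
    u3 ε ℓ x 0 = if x < ℓ - 1 + ε then L3.A else if x < ε then L3.B else L3.C := rfl

lemma u3_add (ε ℓ x : ℝ) (m n : ℕ) : u3 ε ℓ x (m + n) = u3 ε ℓ ((T3 ε ℓ)^[m] x) n := by
  simp only [u3, ← iterate_add_apply, Nat.add_comm n m]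

lemma T3_eq_add_letterShift (ε ℓ x : ℝ) : T3 ε ℓ x = x + letterShift ε (u3 ε ℓ x 0) := by
  rw [u3_zero, T3]
  split_ifs <;> simp only [letterShift] <;> ring

lemma iterate_T3_succ (ε ℓ x : ℝ) (n : ℕ) :
    (T3 ε ℓ)^[n + 1] x = (T3 ε ℓ)^[n] x + letterShift ε (u3 ε ℓ x n) := by
  rw [iterate_succ_apply', T3_eq_add_letterShift, ← u3_add, Nat.add_zero]

lemma mapsTo_T3 {ε ℓ : ℝ} (hl : max ε (1 - ε) < ℓ) (hl1 : ℓ < 1) :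
    MapsTo (T3 ε ℓ) (Ico 0 ℓ) (Ico 0 ℓ) := by
  obtain ⟨hε, hε'⟩ := max_lt_iff.1 hl
  rintro x ⟨hx0, hxℓ⟩
  unfold T3
  split_ifs <;> constructor <;> linarith

lemma isFirstReturnMap_T3 {ε ℓ : ℝ} (hl : max ε (1 - ε) < ℓ) (hl1 : ℓ < 1) :
    IsFirstReturnMap (T2 ε) (Ico 0 ℓ) (T3 ε ℓ) := by
  refine fun x hx => ⟨mapsTo_T3 hl hl1 hx, ?_⟩
  by_cases hB : ℓ - 1 + ε ≤ x ∧ x < ε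
  · obtain ⟨hBl, hBr⟩ := hB
    -- The first step leads into `[ℓ, 1)`, which lies to the right of `ε`.
    have hstep : T2 ε x = x + 1 - ε := if_pos hBr
    refine ⟨2, two_pos, ?_, fun i hi0 hi2 => ?_⟩
    · rw [iterate_succ_apply, iterate_one, hstep, T2, T3, if_neg hBl.not_gt, if_pos hBr,
        if_neg (by linarith [le_max_left ε (1 - ε)])]
      ring
    · obtain rfl : i = 1 := by omega
      rw [iterate_one, hstep]
      exact fun hmem => by linarith [hmem.2]
  · refine ⟨1, one_pos, ?_, by omega⟩
    rw [iterate_one, T2, T3]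
    split_ifs <;> grind

theorem not_eventuallyPeriodic_u3 {ε ℓ x : ℝ} (hirr : Irrational ε) (hl : max ε (1 - ε) < ℓ)
    (hl1 : ℓ < 1) (hx : x ∈ Ico 0 ℓ) : ¬ EventuallyPeriodic (u3 ε ℓ x) := by
  intro hu
  have horbit (n : ℕ) : (T3 ε ℓ)^[n] x ∈ Ico 0 ℓ := (mapsTo_T3 hl hl1).iterate n hx
  obtain ⟨N, p, hp, heq⟩ := hu.exists_add_eq (iterate_T3_succ ε ℓ x)
    ((Metric.isBounded_Ico 0 ℓ).subset (range_subset_iff.2 horbit))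
  have hper : (T3 ε ℓ)^[N] x ∈ periodicPts (T3 ε ℓ) := by
    refine mk_mem_periodicPts hp ?_
    rwa [IsPeriodicPt, IsFixedPt, ← iterate_add_apply, Nat.add_comm]
  exact notMem_periodicPts_T2 hirr _ ((isFirstReturnMap_T3 hl hl1).mem_periodicPts (horbit N) hper)

/-! ### Uniform recurrence of the coding -/

lemma eventually_u3_zero_eq (ε ℓ y : ℝ) : ∀ᶠ z in 𝓝[≥] y, u3 ε ℓ z 0 = u3 ε ℓ y 0 := by
  filter_upwards [eventually_lt_iff_lt_nhdsGE y (ℓ - 1 + ε), eventually_lt_iff_lt_nhdsGE y ε]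
    with z hA hB
  simp only [u3_zero, hA, hB]

lemma tendsto_T3_nhdsGE (ε ℓ y : ℝ) : Tendsto (T3 ε ℓ) (𝓝[≥] y) (𝓝[≥] (T3 ε ℓ y)) := by
  have hlocal : T3 ε ℓ =ᶠ[𝓝[≥] y] (· + letterShift ε (u3 ε ℓ y 0)) := by
    filter_upwards [eventually_u3_zero_eq ε ℓ y] with z hz
    rw [T3_eq_add_letterShift, hz]
  rw [T3_eq_add_letterShift]
  exact (tendsto_add_right_nhdsGE _ y).congr' hlocal.symm

lemma eventually_forall_lt_u3_eq (ε ℓ y : ℝ) (n : ℕ) :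
    ∀ᶠ z in 𝓝[≥] y, ∀ t < n, u3 ε ℓ z t = u3 ε ℓ y t :=
  (eventually_all_finite (finite_lt_nat n)).2 fun t _ =>
    (tendsto_iterate_nhdsGE (tendsto_T3_nhdsGE ε ℓ) t y).eventually (eventually_u3_zero_eq ε ℓ _)

theorem uniformlyRecurrent_u3 {ε ℓ x : ℝ} (hirr : Irrational ε) (hl : max ε (1 - ε) < ℓ)
    (hl1 : ℓ < 1) (hx : x ∈ Ico 0 ℓ) :
    UniformlyRecurrent (u3 ε ℓ x) := by
  refine uniformlyRecurrent_of_forall_exists_le fun i n => ?_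
  have horbit (k : ℕ) : (T3 ε ℓ)^[k] x ∈ Ico 0 ℓ := (mapsTo_T3 hl hl1).iterate k hx
  set y := (T3 ε ℓ)^[i] x with hy
  let V : Set ℝ := {z ∈ Ico 0 ℓ | ∀ t < n, u3 ε ℓ z t = u3 ε ℓ y t}
  have hV : V ∈ 𝓝[≥] y :=
    inter_mem (Ico_mem_nhdsGE_of_mem (horbit i)) (eventually_forall_lt_u3_eq ε ℓ y n)
  have hIco : Ico 0 ℓ ⊆ Ico 0 1 := Ico_subset_Ico_right hl1.le
  obtain ⟨hε, hε'⟩ := max_lt_iff.1 hl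
  obtain ⟨M, hM⟩ := exists_forall_exists_le_iterate_T2_mem hirr (by linarith) (by linarith)
    isOpen_interior (interior_nonempty_of_mem_nhdsGE hV)
    (interior_subset.trans ((sep_subset _ _).trans hIco))
  refine ⟨M, fun k => ?_⟩
  obtain ⟨m, hm, hmV⟩ := hM _ (hIco (horbit k))
  obtain ⟨hmem, hcode⟩ := interior_subset hmV
  obtain ⟨j, hj, hjm⟩ := (isFirstReturnMap_T3 hl hl1).exists_iterate_eq_of_mem (horbit k) hmem
  refine ⟨j, hj.trans hm, fun t ht => ?_⟩
  rw [Nat.add_assoc, u3_add _ _ _ k, u3_add _ _ _ j, hjm, hcode t ht, hy, ← u3_add]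

/-- every 3iet word is aperiodic and uniformly recurrent. -/
theorem threeIet_aperiodic_and_uniformlyRecurrent
    (ε ℓ x0 : ℝ) (hirr : Irrational ε) (h0 : 0 < ε) (h1 : ε < 1)
    (hl : max ε (1 - ε) < ℓ) (hl1 : ℓ < 1) (hx0 : x0 ∈ Set.Ico 0 ℓ) :
    ¬ EventuallyPeriodic (u3 ε ℓ x0) ∧ UniformlyRecurrent (u3 ε ℓ x0) :=
  ⟨not_eventuallyPeriodic_u3 hirr hl hl1 hx0, uniformlyRecurrent_u3 hirr hl hl1 hx0⟩
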